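/- For all pairs (f, f^[1]) and (g, g^[1]) in D_ℓ², the limits W(f,g)(a) := lim_{x↓a, x∈𝕋} W(f,g)(σ(x)) and W(f,g)(b) := lim_{x↑b, x∈𝕋} W(f,g)(σ(x)) exist and are finite complex numbers. -/

import Mathlib

open MeasureTheory Set Filter
open scoped ENNReal NNReal Classical

/-- Forward shift of a time scale. -/
noncomputable def tsSigma (T : Set ℝ) (t : ℝ) : ℝ :=
  if ({s | s ∈ T ∧ t < s}).Nonempty then sInf {s | s ∈ T ∧ t < s} else sSup T

/-- Backward shift of a time scale. -/
noncomputable def tsRho (T : Set ℝ) (t : ℝ) : ℝ :=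
  if ({s | s ∈ T ∧ s < t}).Nonempty then sSup {s | s ∈ T ∧ s < t} else sInf T

/-- `𝕋_κ` : the time scale with the left endpoint removed if it is finite and right-scattered. -/
noncomputable def tsKappa (T : Set ℝ) : Set ℝ :=
  if BddBelow T ∧ sInf T < tsSigma T (sInf T) then T \ {sInf T} else T

/-- Extension `p̄` of a function on `𝕋_κ` to all of `ℝ`. -/
noncomputable def extK (T : Set ℝ) (p : ℝ → ℂ) (t : ℝ) : ℂ :=
  if t ∈ tsKappa T then p t else p (tsSigma (tsKappa T) t)

/-- Coercion of a real-valued coefficient to a complex-valued one. -/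
def cR (f : ℝ → ℝ) : ℝ → ℂ := fun t => (f t : ℂ)

/-- `(u, u^[1])` is an integrated pair with density `h` against the measure `μ = dσ_κ`. -/
def IsPair (T : Set ℝ) (μ : Measure ℝ) (p : ℝ → ℂ) (u u1 h : ℝ → ℂ) : Prop :=
  ∀ c x : ℝ, c ≤ x →
    u x = u c + ∫ t in c..x, u1 t / extK T p t ∧
    u1 x = u1 c + ∫ t in Set.Ioc c x, h t ∂μ

/-- `(u, u^[1])` is a solution pair of `(ℓ - z) u = g`. -/
def IsSLSol (T : Set ℝ) (μ : Measure ℝ) (p r q : ℝ → ℂ) (z : ℂ) (g : ℝ → ℂ)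
    (u u1 : ℝ → ℂ) : Prop :=
  IsPair T μ p u u1 (fun t => (q t - z * r t) * u t - r t * g t)

/-- Wronskian of two pairs. -/
def Wr (u u1 v v1 : ℝ → ℂ) (x : ℝ) : ℂ := u x * v1 x - u1 x * v x

/-- The integrand `|u|² r` as an `ℝ≥0∞`-valued function. -/
noncomputable def sqWeight (r : ℝ → ℝ) (u : ℝ → ℂ) (t : ℝ) : ℝ≥0∞ :=
  ((‖u t‖₊ : ℝ≥0∞)) ^ 2 * ENNReal.ofReal (r t)

/-- `u` lies in `L²` near the left endpoint `a`. -/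
def L2NearLeft (T : Set ℝ) (μ : Measure ℝ) (r : ℝ → ℝ) (u : ℝ → ℂ) : Prop :=
  ∀ c ∈ tsKappa T, ∫⁻ t in {t | (∃ s ∈ T, s < t) ∧ t ≤ c} ∩ tsKappa T, sqWeight r u t ∂μ < ∞

/-- `u` lies in `L²` near the right endpoint `b`. -/
def L2NearRight (T : Set ℝ) (μ : Measure ℝ) (r : ℝ → ℝ) (u : ℝ → ℂ) : Prop :=
  ∀ c ∈ tsKappa T, ∫⁻ t in {t | c ≤ t ∧ ∃ s ∈ T, t < s} ∩ tsKappa T, sqWeight r u t ∂μ < ∞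

/-- `ℓ` is in the limit-circle case at the left endpoint. -/
def LimitCircleLeft (T : Set ℝ) (μ : Measure ℝ) (p r q : ℝ → ℝ) : Prop :=
  ∀ z : ℂ, ∀ u u1 : ℝ → ℂ, IsSLSol T μ (cR p) (cR r) (cR q) z 0 u u1 → L2NearLeft T μ r u

/-- `ℓ` is in the limit-point case at the left endpoint. -/
def LimitPointLeft (T : Set ℝ) (μ : Measure ℝ) (p r q : ℝ → ℝ) : Prop :=
  ∀ z : ℂ, ∃ u u1 : ℝ → ℂ, IsSLSol T μ (cR p) (cR r) (cR q) z 0 u u1 ∧ ¬ L2NearLeft T μ r u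

/-- `ℓ` is in the limit-circle case at the right endpoint. -/
def LimitCircleRight (T : Set ℝ) (μ : Measure ℝ) (p r q : ℝ → ℝ) : Prop :=
  ∀ z : ℂ, ∀ u u1 : ℝ → ℂ, IsSLSol T μ (cR p) (cR r) (cR q) z 0 u u1 → L2NearRight T μ r u

/-- `ℓ` is in the limit-point case at the right endpoint. -/
def LimitPointRight (T : Set ℝ) (μ : Measure ℝ) (p r q : ℝ → ℝ) : Prop :=
  ∀ z : ℂ, ∃ u u1 : ℝ → ℂ, IsSLSol T μ (cR p) (cR r) (cR q) z 0 u u1 ∧ ¬ L2NearRight T μ r u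

/-- The action `ℓ u = (-h + q u)/r` of the differential expression on a pair with density `h`. -/
noncomputable def ellApply (r q : ℝ → ℝ) (h u : ℝ → ℂ) (t : ℝ) : ℂ :=
  (-h t + (q t : ℂ) * u t) / (r t : ℂ)

/-- Membership in `L²(𝕋_κ; r dσ_κ)`. -/
def MemL2T (T : Set ℝ) (μ : Measure ℝ) (r : ℝ → ℝ) (u : ℝ → ℂ) : Prop :=
  ∫⁻ t in tsKappa T, sqWeight r u t ∂μ < ∞

/-- The pair `(u, u^[1])` with density `h` belongs to `D_ℓ²`. -/
def MemD2 (T : Set ℝ) (μ : Measure ℝ) (p r q : ℝ → ℝ) (u u1 h : ℝ → ℂ) : Prop :=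
  LocallyIntegrable h μ ∧ IsPair T μ (cR p) u u1 h ∧ MemL2T T μ r u ∧
    MemL2T T μ r (ellApply r q h u)

/-- The filter `x ↓ a`, `x ∈ 𝕋`. -/
noncomputable def leftLimFilter (T : Set ℝ) : Filter ℝ :=
  if BddBelow T then nhdsWithin (sInf T) T else Filter.atBot ⊓ Filter.principal T

/-- The filter `x ↑ b`, `x ∈ 𝕋`. -/
noncomputable def rightLimFilter (T : Set ℝ) : Filter ℝ :=
  if BddAbove T then nhdsWithin (sSup T) T else Filter.atTop ⊓ Filter.principal T

/-- The measure `r dσ_κ` on `𝕋_κ`, giving the Hilbert space `L²(𝕋_κ; r dσ_κ)`. -/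
noncomputable def wM (T : Set ℝ) (μ : Measure ℝ) (r : ℝ → ℝ) : Measure ℝ :=
  (μ.restrict (tsKappa T)).withDensity fun t => ENNReal.ofReal (r t)

/-!
For `x ≥ c`, integration by parts gives Lagrange's identity
`W(f,g)(x) - W(f,g)(c) = ∫_{(c,x]} (f h_g - h_f g) dσ_κ`; no jump correction appears, because one
factor of each product is a primitive with respect to Lebesgue measure, which has no atoms. The
integrand equals `r (g ℓf - f ℓg)`, so it is integrable over all of `ℝ` by Cauchy–Schwarz. The
Wronskian therefore has limits at `±∞`, is right-continuous everywhere, and is continuous at a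
finite right endpoint, where `dσ_κ` has no atom.

Integration by parts requires `1/p̄` to be locally Lebesgue integrable. This holds because `p̄` is
`p` composed with the map sending `t` to the first point of `𝕋_κ` at or after `t`: this map pushes
Lebesgue measure on the part of the line lying strictly between two points of `𝕋` forward to `dρ`,
and it is constant on each of the two remaining half-lines.
-/

section Primitive

variable {E : Type*} [NormedAddCommGroup E] {α : Measure ℝ} {F u : ℝ → E}

theorem intervalIntegrable_of_locallyIntegrable (hF : LocallyIntegrable F α) (a b : ℝ) :
    IntervalIntegrable F α a b :=
  (hF.integrableOn_isCompact isCompact_uIcc).intervalIntegrable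

variable [NormedSpace ℝ E]

/-- `u` is a primitive of `F` with respect to `α`: its increment from `c` to `x ≥ c` is the integral
of `F` over `(c, x]`, so `u` is right-continuous at the atoms of `α`. -/
def IsPrimitive (α : Measure ℝ) (F u : ℝ → E) : Prop :=
  ∀ c x, u x = u c + ∫ t in c..x, F t ∂α

theorem isPrimitive_of_le (h : ∀ c x, c ≤ x → u x = u c + ∫ t in c..x, F t ∂α) :
    IsPrimitive α F u := by
  intro c x
  rcases le_total c x with hcx | hxc
  · exact h c x hcx
  · rw [intervalIntegral.integral_symm, ← sub_eq_add_neg, eq_sub_iff_add_eq]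
    exact (h x c hxc).symm

theorem isPrimitive_integral (hF : LocallyIntegrable F α) (a : ℝ) :
    IsPrimitive α F fun x => ∫ t in a..x, F t ∂α := fun _ _ =>
  (intervalIntegral.integral_add_adjacent_intervals
    (intervalIntegrable_of_locallyIntegrable hF _ _)
    (intervalIntegrable_of_locallyIntegrable hF _ _)).symm

namespace IsPrimitive

theorem continuousAt (hu : IsPrimitive α F u) (hF : LocallyIntegrable F α) {s : ℝ}
    (hs : α {s} = 0) : ContinuousAt u s := by
  have hcont : ContinuousAt (fun x => ∫ t in s..x, F t ∂α) s :=
    (intervalIntegral.continuousWithinAt_primitive hs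
      (intervalIntegrable_of_locallyIntegrable hF _ _)).continuousAt
        (Icc_mem_nhds (sub_one_lt s) (lt_add_one s))
  rw [show u = fun x => u s + ∫ t in s..x, F t ∂α from funext (hu s)]
  exact continuousAt_const.add hcont

theorem continuousWithinAt_Ici (hu : IsPrimitive α F u) (hF : LocallyIntegrable F α) (s : ℝ) :
    ContinuousWithinAt u (Ici s) s := by
  have hF' : LocallyIntegrable F (α.restrict (Ioi s)) := hF.mono_measure Measure.restrict_le_self
  have hcont : ContinuousAt (fun x => ∫ t in s..x, F t ∂α.restrict (Ioi s)) s :=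
    (isPrimitive_integral hF' s).continuousAt hF' (by simp)
  have heq : ∀ x ∈ Ici s, u x = u s + ∫ t in s..x, F t ∂α.restrict (Ioi s) := fun x hx => by
    rw [hu s x, intervalIntegral.integral_of_le hx, intervalIntegral.integral_of_le hx,
      Measure.restrict_restrict_of_subset Ioc_subset_Ioi_self]
  exact (continuousAt_const.add hcont).continuousWithinAt.congr heq (heq s self_mem_Ici)

theorem exists_tendsto_atTop (hu : IsPrimitive α F u) (hF : Integrable F α) :
    ∃ w, Tendsto u atTop (nhds w) := by
  refine ⟨u 0 + ∫ t in Ioi 0, F t ∂α, ?_⟩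
  refine Tendsto.congr (fun x => (hu 0 x).symm) (Tendsto.const_add (u 0) ?_)
  exact intervalIntegral_tendsto_integral_Ioi 0 hF.integrableOn tendsto_id

theorem exists_tendsto_atBot (hu : IsPrimitive α F u) (hF : Integrable F α) :
    ∃ w, Tendsto u atBot (nhds w) := by
  refine ⟨u 0 - ∫ t in Iic 0, F t ∂α, ?_⟩
  refine Tendsto.congr (fun x => sub_eq_of_eq_add (hu x 0)) (Tendsto.const_sub (u 0) ?_)
  exact intervalIntegral_tendsto_integral_Iic 0 hF.integrableOn tendsto_id

theorem measurable [MeasurableSpace E] [BorelSpace E] [SFinite α] (hu : IsPrimitive α F u)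
    (hF : LocallyIntegrable F α) : Measurable u := by
  have hatoms : {s | 0 < α {s}}.Countable :=
    Measure.countable_meas_pos_of_disjoint_iUnion measurableSet_singleton fun _ _ h =>
      disjoint_singleton.2 h
  refine measurable_of_countable_not_continuousAt (hatoms.mono fun s hs => ?_)
  exact pos_iff_ne_zero.2 fun h => hs (hu.continuousAt hF h)

theorem norm_le (hu : IsPrimitive α F u) (hF : LocallyIntegrable F α) {a b x : ℝ}
    (hx : x ∈ Icc a b) : ‖u x‖ ≤ ‖u a‖ + ∫ t in a..b, ‖F t‖ ∂α := by
  rw [hu a x]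
  refine (norm_add_le _ _).trans (add_le_add_right ?_ _)
  exact (intervalIntegral.norm_integral_le_integral_norm hx.1).trans
    (intervalIntegral.integral_mono_interval le_rfl hx.1 hx.2
      (Eventually.of_forall fun _ => norm_nonneg _)
      (intervalIntegrable_of_locallyIntegrable hF _ _).norm)

end IsPrimitive

end Primitive

section Product

variable {𝕜 : Type*} [RCLike 𝕜] {α β : Measure ℝ} [SFinite α] {F G u v : ℝ → 𝕜}

theorem IsPrimitive.locallyIntegrable_mul (hu : IsPrimitive α F u) (hF : LocallyIntegrable F α)
    (hG : LocallyIntegrable G β) : LocallyIntegrable (fun t => u t * G t) β := by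
  intro x
  refine ⟨Icc (x - 1) (x + 1), Icc_mem_nhds (sub_one_lt x) (lt_add_one x), ?_⟩
  refine (hG.integrableOn_isCompact isCompact_Icc).bdd_mul
    (c := ‖u (x - 1)‖ + ∫ t in (x - 1)..(x + 1), ‖F t‖ ∂α)
    (hu.measurable hF).aestronglyMeasurable ?_
  filter_upwards [ae_restrict_mem measurableSet_Icc] with t ht using hu.norm_le hF ht

theorem IsPrimitive.locallyIntegrable_div (hu : IsPrimitive α F u) (hF : LocallyIntegrable F α)
    (hG : LocallyIntegrable (fun t => 1 / G t) β) : LocallyIntegrable (fun t => u t / G t) β := by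
  simpa only [mul_one_div] using hu.locallyIntegrable_mul hF hG

variable [SFinite β]

/-- Fubini on the square `(c, x]²`, cut along its diagonal, which has measure zero. -/
theorem integral_Ioc_mul_integral_Ioc [NullSingletonClass α] {c x : ℝ}
    (hF : IntegrableOn F (Ioc c x) α) (hG : IntegrableOn G (Ioc c x) β) :
    (∫ s in Ioc c x, F s ∂α) * (∫ t in Ioc c x, G t ∂β) =
      (∫ s in Ioc c x, F s * ∫ t in Ioc c s, G t ∂β ∂α) +
        ∫ t in Ioc c x, (∫ s in Ioc c t, F s ∂α) * G t ∂β := by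
  have hFG := Integrable.mul_prod hF hG
  have hmeas : MeasurableSet {z : ℝ × ℝ | z.2 ≤ z.1} :=
    measurableSet_le measurable_snd measurable_fst
  rw [← integral_prod_mul, ← integral_add_compl hmeas hFG, ← integral_indicator hmeas,
    ← integral_indicator hmeas.compl, integral_prod _ (hFG.indicator hmeas),
    integral_prod_symm _ (hFG.indicator hmeas.compl)]
  congr 1
  · refine setIntegral_congr_fun measurableSet_Ioc fun s hs => ?_
    have hslice : (fun t => {z : ℝ × ℝ | z.2 ≤ z.1}.indicator (fun z => F z.1 * G z.2) (s, t)) =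
        (Iic s).indicator fun t => F s * G t := by
      ext t; simp [indicator]
    simp only [hslice]
    rw [setIntegral_indicator measurableSet_Iic, Ioc_inter_Iic, min_eq_right hs.2,
      integral_const_mul]
  · refine setIntegral_congr_fun measurableSet_Ioc fun t ht => ?_
    have hslice : (fun s => {z : ℝ × ℝ | z.2 ≤ z.1}ᶜ.indicator (fun z => F z.1 * G z.2) (s, t)) =
        (Iio t).indicator fun s => F s * G t := by
      ext s; simp [indicator]
    have hinter : Ioc c x ∩ Iio t = Ioo c t :=
      ext fun s => ⟨fun h => ⟨h.1.1, h.2⟩, fun h => ⟨⟨h.1, h.2.le.trans ht.2⟩, h.2⟩⟩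
    simp only [hslice]
    rw [setIntegral_indicator measurableSet_Iio, hinter, integral_mul_const,
      integral_Ioc_eq_integral_Ioo]

theorem IsPrimitive.mul_eq [NullSingletonClass α] (hu : IsPrimitive α F u)
    (hF : LocallyIntegrable F α) (hv : IsPrimitive β G v) (hG : LocallyIntegrable G β) {c x : ℝ}
    (hcx : c ≤ x) :
    u x * v x = u c * v c +
      ((∫ t in Ioc c x, F t * v t ∂α) + ∫ t in Ioc c x, u t * G t ∂β) := by
  have hIoc {γ : Measure ℝ} {H w : ℝ → 𝕜} (hw : IsPrimitive γ H w) {y : ℝ} (hy : c ≤ y) :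
      ∫ t in Ioc c y, H t ∂γ = w y - w c := by
    rw [hw c y, intervalIntegral.integral_of_le hy, add_sub_cancel_left]
  have hOn {γ : Measure ℝ} {H : ℝ → 𝕜} (hH : LocallyIntegrable H γ) :
      IntegrableOn H (Ioc c x) γ :=
    (intervalIntegrable_of_locallyIntegrable hH c x).1
  have hFv : IntegrableOn (fun t => F t * v t) (Ioc c x) α := by
    simpa only [mul_comm] using hOn (hv.locallyIntegrable_mul hG hF)
  have huG : IntegrableOn (fun t => u t * G t) (Ioc c x) β := hOn (hu.locallyIntegrable_mul hF hG)
  have hleft : ∫ s in Ioc c x, F s * ∫ t in Ioc c s, G t ∂β ∂α =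
      (∫ s in Ioc c x, F s * v s ∂α) - (u x - u c) * v c := by
    rw [← hIoc hu hcx, ← integral_mul_const, ← integral_sub hFv ((hOn hF).mul_const _)]
    refine setIntegral_congr_fun measurableSet_Ioc fun s hs => ?_
    simp only [hIoc hv hs.1.le, mul_sub]
  have hright : ∫ t in Ioc c x, (∫ s in Ioc c t, F s ∂α) * G t ∂β =
      (∫ t in Ioc c x, u t * G t ∂β) - u c * (v x - v c) := by
    rw [← hIoc hv hcx, ← integral_const_mul, ← integral_sub huG ((hOn hG).const_mul _)]
    refine setIntegral_congr_fun measurableSet_Ioc fun t ht => ?_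
    simp only [hIoc hu ht.1.le, sub_mul]
  have hfubini := integral_Ioc_mul_integral_Ioc (hOn hF) (hOn hG)
  rw [hIoc hu hcx, hIoc hv hcx, hleft, hright] at hfubini
  linear_combination hfubini

end Product

section Lagrange

variable {α μ : Measure ℝ} [SFinite α] [NullSingletonClass α] [SFinite μ] {P f f1 g g1 φ ψ : ℝ → ℂ}

theorem isPrimitive_wr (hP : LocallyIntegrable (fun t => 1 / P t) α)
    (hf : IsPrimitive α (fun t => f1 t / P t) f) (hf1 : IsPrimitive μ φ f1)
    (hφ : LocallyIntegrable φ μ) (hg : IsPrimitive α (fun t => g1 t / P t) g)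
    (hg1 : IsPrimitive μ ψ g1) (hψ : LocallyIntegrable ψ μ) :
    IsPrimitive μ (fun t => f t * ψ t - φ t * g t) (Wr f f1 g g1) := by
  have hf1P := hf1.locallyIntegrable_div hφ hP
  have hg1P := hg1.locallyIntegrable_div hψ hP
  refine isPrimitive_of_le fun c x hcx => ?_
  have hfg1 := hf.mul_eq hf1P hg1 hψ hcx
  have hgf1 := hg.mul_eq hg1P hf1 hφ hcx
  have hsymm : ∫ t in Ioc c x, g1 t / P t * f1 t ∂α = ∫ t in Ioc c x, f1 t / P t * g1 t ∂α := by
    congr 1 with t; ring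
  simp only [Wr, mul_comm (φ _)]
  rw [intervalIntegral.integral_of_le hcx, integral_sub
    (intervalIntegrable_of_locallyIntegrable (hf.locallyIntegrable_mul hf1P hψ) c x).1
    (intervalIntegrable_of_locallyIntegrable (hg.locallyIntegrable_mul hg1P hφ) c x).1]
  linear_combination hfg1 - hgf1 - hsymm

end Lagrange

section Shifts

variable {T : Set ℝ} {s t d : ℝ}

theorem tsSigma_le (hs : s ∈ T) (hts : t < s) : tsSigma T t ≤ s := by
  rw [tsSigma, if_pos ⟨s, hs, hts⟩]
  exact csInf_le ⟨t, fun x hx => hx.2.le⟩ ⟨hs, hts⟩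

theorem tsSigma_eq_csSup (ht : t ∈ upperBounds T) : tsSigma T t = sSup T :=
  if_neg fun ⟨_, hs, hts⟩ => hts.not_ge (ht hs)

theorem nonempty_setOf_mem_and_lt (ht : t ∉ upperBounds T) : {s | s ∈ T ∧ t < s}.Nonempty := by
  simpa [upperBounds, Set.Nonempty] using ht

theorem tsSigma_le_csSup (hT : BddAbove T) (t : ℝ) : tsSigma T t ≤ sSup T := by
  by_cases ht : t ∈ upperBounds T
  · exact (tsSigma_eq_csSup ht).le
  · obtain ⟨s, hs, hts⟩ := nonempty_setOf_mem_and_lt ht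
    exact (tsSigma_le hs hts).trans (le_csSup hT hs)

theorem le_tsSigma (hs : s ∈ T) (hts : t ≤ s) : t ≤ tsSigma T t := by
  by_cases ht : t ∈ upperBounds T
  · exact (tsSigma_eq_csSup ht).symm ▸ hts.trans (le_csSup ⟨t, ht⟩ hs)
  · have hne := nonempty_setOf_mem_and_lt ht
    rw [tsSigma, if_pos hne]
    exact le_csInf hne fun x hx => hx.2.le

theorem tsSigma_mono (T : Set ℝ) : Monotone (tsSigma T) := by
  intro t t' htt'
  by_cases ht : t ∈ upperBounds T
  · rw [tsSigma_eq_csSup ht, tsSigma_eq_csSup fun x hx => (ht hx).trans htt']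
  by_cases ht' : t' ∈ upperBounds T
  · exact tsSigma_eq_csSup ht' ▸ tsSigma_le_csSup ⟨t', ht'⟩ t
  · have hne := nonempty_setOf_mem_and_lt ht
    have hne' := nonempty_setOf_mem_and_lt ht'
    rw [tsSigma, tsSigma, if_pos hne, if_pos hne']
    exact csInf_le_csInf ⟨t, fun x hx => hx.2.le⟩ hne' fun x hx => ⟨hx.1, htt'.trans_lt hx.2⟩

theorem continuousWithinAt_tsSigma_Ici (T : Set ℝ) (t : ℝ) :
    ContinuousWithinAt (tsSigma T) (Ici t) t := by
  by_cases ht : t ∈ upperBounds T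
  · exact continuousWithinAt_const.congr
      (fun x hx => tsSigma_eq_csSup fun y hy => (ht hy).trans hx) (tsSigma_eq_csSup ht)
  · have hne := nonempty_setOf_mem_and_lt ht
    refine tendsto_order.2 ⟨fun e he => ?_, fun e he => ?_⟩
    · filter_upwards [self_mem_nhdsWithin] with x hx using he.trans_le (tsSigma_mono T hx)
    · rw [tsSigma, if_pos hne] at he
      obtain ⟨s, ⟨hs, hts⟩, hse⟩ := exists_lt_of_csInf_lt hne he
      filter_upwards [mem_nhdsWithin_of_mem_nhds (Iio_mem_nhds hts)] with x hx
      exact (tsSigma_le hs hx).trans_lt hse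

theorem tendsto_tsSigma_atBot (hT : ¬BddBelow T) : Tendsto (tsSigma T) atBot atBot :=
  tendsto_atBot_atBot_of_monotone (tsSigma_mono T) fun M =>
    have ⟨s, hs, hsM⟩ := not_bddBelow_iff.1 hT M
    ⟨s - 1, (tsSigma_le hs (sub_one_lt s)).trans hsM.le⟩

theorem tendsto_tsSigma_atTop (hT : ¬BddAbove T) : Tendsto (tsSigma T) atTop atTop :=
  tendsto_atTop_mono (fun t => have ⟨_, hs, hts⟩ := not_bddAbove_iff.1 hT t
    le_tsSigma hs hts.le) tendsto_id

theorem tendsto_tsSigma_nhdsWithin_csSup (hT : BddAbove T) :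
    Tendsto (tsSigma T) (nhdsWithin (sSup T) T) (nhds (sSup T)) := by
  refine tendsto_of_tendsto_of_tendsto_of_le_of_le' (tendsto_id.mono_left nhdsWithin_le_nhds)
    tendsto_const_nhds ?_ (Eventually.of_forall (tsSigma_le_csSup hT))
  filter_upwards [self_mem_nhdsWithin] with x hx using le_tsSigma hx le_rfl

theorem le_tsRho (hs : s ∈ T) (hsd : s < d) : s ≤ tsRho T d := by
  rw [tsRho, if_pos ⟨s, hs, hsd⟩]
  exact le_csSup ⟨d, fun x hx => hx.2.le⟩ ⟨hs, hsd⟩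

theorem exists_lt_of_tsRho_lt (hT : T.Nonempty) (h : tsRho T d < t) : ∃ s ∈ T, s < t := by
  by_cases hd : {s | s ∈ T ∧ s < d}.Nonempty
  · obtain ⟨s, hs, hsd⟩ := hd
    exact ⟨s, hs, (le_tsRho hs hsd).trans_lt h⟩
  · rw [tsRho, if_neg hd] at h
    exact exists_lt_of_csInf_lt hT h

theorem exists_lt_of_lt_tsRho (hT : (T ∩ Iio t).Nonempty) (h : t < tsRho T d) :
    ∃ s ∈ T, t < s ∧ s < d := by
  by_cases hd : {s | s ∈ T ∧ s < d}.Nonempty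
  · rw [tsRho, if_pos hd] at h
    obtain ⟨s, hs, hts⟩ := exists_lt_of_lt_csSup hd h
    exact ⟨s, hs.1, hts, hs.2⟩
  · rw [tsRho, if_neg hd] at h
    obtain ⟨s, hs, hst⟩ := hT
    have hdT : d ∈ lowerBounds T := fun x hx => not_lt.1 fun hxd => hd ⟨x, hx, hxd⟩
    exact absurd (csInf_le ⟨d, hdT⟩ hs) (hst.trans h).not_ge

end Shifts

section Kappa

variable {T : Set ℝ} {s t : ℝ}

theorem tsKappa_subset (T : Set ℝ) : tsKappa T ⊆ T := by
  unfold tsKappa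
  split_ifs
  exacts [sdiff_subset, subset_rfl]

theorem mem_tsKappa_of_lt (ht : t ∈ T) (hts : t < s) (hs : s ∈ T) : s ∈ tsKappa T := by
  unfold tsKappa
  split_ifs with h
  · exact ⟨hs, ((csInf_le h.1 ht).trans_lt hts).ne'⟩
  · exact hs

theorem isClosed_tsKappa (hT : IsClosed T) : IsClosed (tsKappa T) := by
  unfold tsKappa
  split_ifs with h
  · have : T \ {sInf T} = T ∩ Ici (tsSigma T (sInf T)) := by
      ext s
      refine and_congr_right fun hs => ⟨fun hne => ?_, fun hle => (h.2.trans_le hle).ne'⟩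
      exact tsSigma_le hs ((csInf_le h.1 hs).lt_of_ne' hne)
    exact this ▸ hT.inter isClosed_Ici
  · exact hT

theorem csSup_mem_tsKappa (hne : T.Nonempty) (hcl : IsClosed T) (hT : BddAbove T) :
    sSup T ∈ tsKappa T := by
  have hmem := hcl.csSup_mem hne hT
  unfold tsKappa
  split_ifs with h
  · exact ⟨hmem, (h.2.trans_le (tsSigma_le_csSup hT _)).ne'⟩
  · exact hmem

end Kappa

section ShiftMeasure

variable {K : Set ℝ} {b : ℝ}

/-- The forward shift of `K` as a Stieltjes function; its measure is the measure `dσ` of `K`. -/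
noncomputable def tsSigmaStieltjes (K : Set ℝ) : StieltjesFunction ℝ where
  toFun := tsSigma K
  mono' := tsSigma_mono K
  right_continuous' := continuousWithinAt_tsSigma_Ici K

theorem eq_measure_tsSigmaStieltjes {μ : Measure ℝ}
    (hμ : ∀ c d : ℝ, c ≤ d → μ (Ioc c d) = ENNReal.ofReal (tsSigma K d - tsSigma K c)) :
    μ = (tsSigmaStieltjes K).measure :=
  Measure.ext_of_Ioc' _ _ (fun _ _ hcd => (hμ _ _ hcd.le).trans_ne ENNReal.ofReal_ne_top)
    fun c d hcd => (hμ c d hcd.le).trans ((tsSigmaStieltjes K).measure_Ioc c d).symm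

theorem tsSigma_eq_of_disjoint_Ioc {c d : ℝ} (hcd : c ≤ d) (hK : Disjoint K (Ioc c d)) :
    tsSigma K c = tsSigma K d := by
  have : {s | s ∈ K ∧ c < s} = {s | s ∈ K ∧ d < s} := by
    ext s
    refine and_congr_right fun hs => ⟨fun hcs => ?_, hcd.trans_lt⟩
    exact not_le.1 fun hsd => disjoint_left.1 hK hs ⟨hcs, hsd⟩
  simp only [tsSigma, this]

theorem measure_tsSigmaStieltjes_compl (hK : IsClosed K) :
    (tsSigmaStieltjes K).measure Kᶜ = 0 := by
  refine measure_null_of_locally_null _ fun x hx => ?_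
  obtain ⟨c, d, ⟨hcx, hxd⟩, hsub⟩ := mem_nhds_iff_exists_Ioo_subset.1 (hK.isOpen_compl.mem_nhds hx)
  obtain ⟨e, hxe, hed⟩ := exists_between hxd
  have hdisj : Disjoint K (Ioc c e) :=
    disjoint_right.2 fun y hy => hsub ⟨hy.1, hy.2.trans_lt hed⟩
  refine ⟨Ioc c e, mem_nhdsWithin_of_mem_nhds (Ioc_mem_nhds hcx hxe), ?_⟩
  rw [StieltjesFunction.measure_Ioc, ENNReal.ofReal_eq_zero, sub_nonpos]
  exact (tsSigma_eq_of_disjoint_Ioc (hcx.trans hxe).le hdisj).ge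

theorem restrict_measure_tsSigmaStieltjes (hK : IsClosed K) :
    (tsSigmaStieltjes K).measure.restrict K = (tsSigmaStieltjes K).measure :=
  Measure.restrict_eq_self_of_ae_mem (mem_ae_iff.2 (measure_tsSigmaStieltjes_compl hK))

theorem measure_tsSigmaStieltjes_singleton_of_isGreatest (hb : IsGreatest K b) :
    (tsSigmaStieltjes K).measure {b} = 0 := by
  rw [StieltjesFunction.measure_singleton, ENNReal.ofReal_eq_zero, sub_nonpos]
  calc tsSigma K b = b := (tsSigma_eq_csSup hb.2).trans hb.csSup_eq
    _ ≤ Function.leftLim (tsSigma K) b := le_of_forall_lt_imp_le_of_dense fun x hxb =>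
        (le_tsSigma hb.1 hxb.le).trans ((tsSigma_mono K).le_leftLim hxb)

end ShiftMeasure

section Ceil

variable {T K : Set ℝ} {t d : ℝ}

/-- The first point of `K` at or to the right of `t` (`sSup K` if there is none). For
`K = 𝕋_κ`, composition with this map is the extension `p ↦ p̄`. -/
noncomputable def tsCeil (K : Set ℝ) (t : ℝ) : ℝ :=
  if t ∈ K then t else tsSigma K t

/-- The points lying strictly between two points of `T`. -/
def tsBetween (T : Set ℝ) : Set ℝ := (lowerBounds T ∪ upperBounds T)ᶜ

theorem extK_eq_comp_tsCeil (T : Set ℝ) (p : ℝ → ℂ) : extK T p = p ∘ tsCeil (tsKappa T) := by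
  ext t
  simp only [extK, tsCeil, Function.comp_apply, apply_ite p]

theorem tsCeil_le {s : ℝ} (hs : s ∈ K) (hts : t ≤ s) : tsCeil K t ≤ s := by
  unfold tsCeil
  split_ifs with ht
  · exact hts
  · exact tsSigma_le hs (hts.lt_of_ne fun h => ht (h ▸ hs))

theorem tsCeil_mono (K : Set ℝ) : Monotone (tsCeil K) := by
  intro t t' htt'
  by_cases ht' : t' ∈ K
  · exact (tsCeil_le ht' htt').trans_eq (if_pos ht').symm
  by_cases ht : t ∈ K
  · simpa only [tsCeil, if_pos ht, if_neg ht']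
      using (le_tsSigma ht le_rfl).trans (tsSigma_mono K htt')
  · simpa only [tsCeil, if_neg ht, if_neg ht'] using tsSigma_mono K htt'

theorem tsCeil_of_mem_lowerBounds (ht : t ∈ lowerBounds K) : tsCeil K t = sInf K := by
  unfold tsCeil
  split_ifs with htK
  · exact (IsLeast.csInf_eq ⟨htK, ht⟩).symm
  · have : {s | s ∈ K ∧ t < s} = K :=
      ext fun s => and_iff_left_of_imp fun hs => (ht hs).lt_of_ne fun h => htK (h ▸ hs)
    rw [tsSigma, this]
    split_ifs with hK
    · rfl
    · simp [not_nonempty_iff_eq_empty.1 hK]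

theorem tsCeil_of_mem_upperBounds (ht : t ∈ upperBounds K) : tsCeil K t = sSup K := by
  unfold tsCeil
  split_ifs with htK
  · exact (IsGreatest.csSup_eq ⟨htK, ht⟩).symm
  · exact tsSigma_eq_csSup ht

theorem measurableSet_lowerBounds (T : Set ℝ) : MeasurableSet (lowerBounds T) :=
  have hlower : IsLowerSet (lowerBounds T) := fun _ _ h ha _ hs => h.trans (ha hs)
  hlower.ordConnected.measurableSet

theorem measurableSet_upperBounds (T : Set ℝ) : MeasurableSet (upperBounds T) :=
  have hupper : IsUpperSet (upperBounds T) := fun _ _ h ha _ hs => (ha hs).trans h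
  hupper.ordConnected.measurableSet

theorem mem_tsBetween : t ∈ tsBetween T ↔ (∃ s ∈ T, s < t) ∧ ∃ s ∈ T, t < s := by
  simp [tsBetween, lowerBounds, upperBounds]

theorem tsCeil_tsKappa_lt_iff (ht : t ∈ tsBetween T) :
    tsCeil (tsKappa T) t < d ↔ ∃ s ∈ T, t ≤ s ∧ s < d := by
  obtain ⟨⟨a, ha, hat⟩, b, hb, htb⟩ := mem_tsBetween.1 ht
  constructor
  · intro h
    unfold tsCeil at h
    split_ifs at h with htK
    · exact ⟨t, tsKappa_subset T htK, le_rfl, h⟩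
    · have hne : {s | s ∈ tsKappa T ∧ t < s}.Nonempty :=
        ⟨b, mem_tsKappa_of_lt ha (hat.trans htb) hb, htb⟩
      rw [tsSigma, if_pos hne] at h
      obtain ⟨s, hs, hsd⟩ := exists_lt_of_csInf_lt hne h
      exact ⟨s, tsKappa_subset T hs.1, hs.2.le, hsd⟩
  · rintro ⟨s, hs, hts, hsd⟩
    exact (tsCeil_le (mem_tsKappa_of_lt ha (hat.trans_le hts) hs) hts).trans_lt hsd

theorem tsCeil_tsKappa_lt_of_lt_tsRho (ht : t ∈ tsBetween T) (h : t < tsRho T d) :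
    tsCeil (tsKappa T) t < d :=
  have ⟨s, hs, hts, hsd⟩ := exists_lt_of_lt_tsRho (mem_tsBetween.1 ht).1 h
  (tsCeil_tsKappa_lt_iff ht).2 ⟨s, hs, hts.le, hsd⟩

theorem le_tsRho_of_tsCeil_tsKappa_lt (ht : t ∈ tsBetween T) (h : tsCeil (tsKappa T) t < d) :
    t ≤ tsRho T d :=
  have ⟨_, hs, hts, hsd⟩ := (tsCeil_tsKappa_lt_iff ht).1 h
  hts.trans (le_tsRho hs hsd)

theorem Ioo_tsRho_subset_tsBetween (hT : T.Nonempty) (c d : ℝ) :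
    Ioo (tsRho T c) (tsRho T d) ⊆ tsBetween T := by
  rintro t ⟨hct, htd⟩
  have hlt := exists_lt_of_tsRho_lt hT hct
  have ⟨s, hs, hts, _⟩ := exists_lt_of_lt_tsRho hlt htd
  exact mem_tsBetween.2 ⟨hlt, s, hs, hts⟩

theorem volume_tsCeil_preimage_Ico (hT : T.Nonempty) (c d : ℝ) :
    volume (tsCeil (tsKappa T) ⁻¹' Ico c d ∩ tsBetween T) =
      ENNReal.ofReal (tsRho T d - tsRho T c) := by
  apply le_antisymm
  · rw [← Real.volume_Icc]
    refine measure_mono fun t ⟨⟨hct, htd⟩, ht⟩ => ⟨?_, le_tsRho_of_tsCeil_tsKappa_lt ht htd⟩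
    exact not_lt.1 fun h => (tsCeil_tsKappa_lt_of_lt_tsRho ht h).not_ge hct
  · rw [← Real.volume_Ioo]
    refine measure_mono fun t ht => ?_
    have htT := Ioo_tsRho_subset_tsBetween hT c d ht
    refine ⟨⟨?_, tsCeil_tsKappa_lt_of_lt_tsRho htT ht.2⟩, htT⟩
    exact not_lt.1 fun h => (le_tsRho_of_tsCeil_tsKappa_lt htT h).not_gt ht.1

theorem map_tsCeil_restrict_tsBetween (hT : T.Nonempty) {ν : Measure ℝ}
    (hν : ∀ c d : ℝ, c ≤ d → ν (Ico c d) = ENNReal.ofReal (tsRho T d - tsRho T c)) :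
    (volume.restrict (tsBetween T)).map (tsCeil (tsKappa T)) = ν := by
  symm
  refine Measure.ext_of_Ico' _ _ (fun _ _ hcd => (hν _ _ hcd.le).trans_ne ENNReal.ofReal_ne_top)
    fun c d hcd => ?_
  have hmeas := (tsCeil_mono (tsKappa T)).measurable
  rw [hν c d hcd.le, Measure.map_apply hmeas measurableSet_Ico,
    Measure.restrict_apply (hmeas measurableSet_Ico), volume_tsCeil_preimage_Ico hT]

variable {E : Type*} [NormedAddCommGroup E]

theorem integrableOn_comp_tsCeil_inter_tsBetween (hT : T.Nonempty) {ν : Measure ℝ}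
    (hν : ∀ c d : ℝ, c ≤ d → ν (Ico c d) = ENNReal.ofReal (tsRho T d - tsRho T c))
    {g : ℝ → E} (hg : LocallyIntegrable g ν) (c d : ℝ) :
    IntegrableOn (g ∘ tsCeil (tsKappa T)) (Icc c d ∩ tsBetween T) := by
  set φ := tsCeil (tsKappa T)
  have hφ : Monotone φ := tsCeil_mono _
  have hint : IntegrableOn g (Icc (φ c) (φ d)) ν := hg.integrableOn_isCompact isCompact_Icc
  rw [← map_tsCeil_restrict_tsBetween hT hν, IntegrableOn,
    Measure.restrict_map hφ.measurable measurableSet_Icc] at hint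
  have hcomp := hint.comp_measurable hφ.measurable
  rw [Measure.restrict_restrict (hφ.measurable measurableSet_Icc)] at hcomp
  exact IntegrableOn.mono_set hcomp
    (inter_subset_inter_left _ fun t ht => ⟨hφ ht.1, hφ ht.2⟩)

theorem locallyIntegrable_comp_tsCeil (hT : T.Nonempty) {ν : Measure ℝ}
    (hν : ∀ c d : ℝ, c ≤ d → ν (Ico c d) = ENNReal.ofReal (tsRho T d - tsRho T c))
    {g : ℝ → E} (hg : LocallyIntegrable g ν) :
    LocallyIntegrable (g ∘ tsCeil (tsKappa T)) := by
  intro x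
  set I := Icc (x - 1) (x + 1)
  refine ⟨I, Icc_mem_nhds (sub_one_lt x) (lt_add_one x), ?_⟩
  have hconst (y : ℝ) (S : Set ℝ) : IntegrableOn (fun _ => g y) (I ∩ S) :=
    (integrableOn_const (by simp [I])).mono_set inter_subset_left
  have hbelow : IntegrableOn (g ∘ tsCeil (tsKappa T)) (I ∩ lowerBounds T) :=
    (hconst (sInf (tsKappa T)) _).congr_fun (fun t ht => congrArg g (tsCeil_of_mem_lowerBounds
      (lowerBounds_mono_set (tsKappa_subset T) ht.2)).symm)
      (measurableSet_Icc.inter (measurableSet_lowerBounds T))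
  have habove : IntegrableOn (g ∘ tsCeil (tsKappa T)) (I ∩ upperBounds T) :=
    (hconst (sSup (tsKappa T)) _).congr_fun (fun t ht => congrArg g (tsCeil_of_mem_upperBounds
      (upperBounds_mono_set (tsKappa_subset T) ht.2)).symm)
      (measurableSet_Icc.inter (measurableSet_upperBounds T))
  have hbetween : IntegrableOn (g ∘ tsCeil (tsKappa T)) (I ∩ tsBetween T) :=
    integrableOn_comp_tsCeil_inter_tsBetween hT hν hg (x - 1) (x + 1)
  refine ((hbelow.union habove).union hbetween).mono_set ?_
  rw [← inter_union_distrib_left, ← inter_union_distrib_left, tsBetween, union_compl_self,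
    inter_univ]

end Ceil

section SquareIntegrable

variable {T : Set ℝ} {μ : Measure ℝ} {r q : ℝ → ℝ} {u f g φ ψ : ℝ → ℂ}

theorem MemL2T.memLp (hu : MemL2T T μ r u) (hr : AEMeasurable r μ)
    (hum : AEStronglyMeasurable u μ) : MemLp u 2 (wM T μ r) := by
  have hac : wM T μ r ≪ μ.restrict (tsKappa T) := withDensity_absolutelyContinuous _ _
  refine ⟨hum.restrict.mono_ac hac, ?_⟩
  rw [eLpNorm_lt_top_iff_lintegral_rpow_enorm_lt_top (by simp) (by simp), wM,
    lintegral_withDensity_eq_lintegral_mul₀ hr.restrict.ennreal_ofReal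
      (hum.restrict.enorm.pow_const _)]
  refine lt_of_eq_of_lt (lintegral_congr fun t => ?_) hu
  simp [sqWeight, mul_comm, enorm]

theorem aestronglyMeasurable_ellApply (hr : AEStronglyMeasurable r μ)
    (hq : AEStronglyMeasurable q μ) (hφ : AEStronglyMeasurable φ μ)
    (hu : AEStronglyMeasurable u μ) : AEStronglyMeasurable (ellApply r q φ u) μ := by
  have hrC : AEMeasurable (fun t => (r t : ℂ)) μ := hr.aemeasurable.complex_ofReal
  have hqC : AEMeasurable (fun t => (q t : ℂ)) μ := hq.aemeasurable.complex_ofReal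
  exact ((hφ.aemeasurable.neg.add (hqC.mul hu.aemeasurable)).div hrC).aestronglyMeasurable

theorem mul_sub_mul_eq_smul_ellApply {t : ℝ} (ht : r t ≠ 0) :
    f t * ψ t - φ t * g t = r t • (g t * ellApply r q φ f t - f t * ellApply r q ψ g t) := by
  have htC : (r t : ℂ) ≠ 0 := Complex.ofReal_ne_zero.2 ht
  rw [Complex.real_smul]
  unfold ellApply
  field_simp
  ring

theorem integrableOn_tsKappa_mul_sub_mul (hr : AEStronglyMeasurable r μ)
    (hrpos : ∀ᵐ t ∂μ, 0 < r t) (hq : AEStronglyMeasurable q μ)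
    (hf : AEStronglyMeasurable f μ) (hφ : AEStronglyMeasurable φ μ)
    (hg : AEStronglyMeasurable g μ) (hψ : AEStronglyMeasurable ψ μ)
    (hfL2 : MemL2T T μ r f) (hφL2 : MemL2T T μ r (ellApply r q φ f))
    (hgL2 : MemL2T T μ r g) (hψL2 : MemL2T T μ r (ellApply r q ψ g)) :
    IntegrableOn (fun t => f t * ψ t - φ t * g t) (tsKappa T) μ := by
  have hrm := hr.aemeasurable
  have hℓf := hφL2.memLp hrm (aestronglyMeasurable_ellApply hr hq hφ hf)
  have hℓg := hψL2.memLp hrm (aestronglyMeasurable_ellApply hr hq hψ hg)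
  have hint : Integrable (fun t => g t * ellApply r q φ f t - f t * ellApply r q ψ g t)
      (wM T μ r) :=
    ((hgL2.memLp hrm hg).integrable_mul hℓf).sub ((hfL2.memLp hrm hf).integrable_mul hℓg)
  rw [wM, integrable_withDensity_iff_integrable_smul₀' hrm.restrict.ennreal_ofReal
    (Eventually.of_forall fun _ => ENNReal.ofReal_lt_top)] at hint
  refine hint.congr ?_
  filter_upwards [ae_restrict_of_ae hrpos] with t ht
  rw [ENNReal.toReal_ofReal ht.le]
  exact (mul_sub_mul_eq_smul_ellApply ht.ne').symm

end SquareIntegrable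

section EndpointLimits

variable {E : Type*} [NormedAddCommGroup E] [NormedSpace ℝ E] {μ : Measure ℝ} {F u : ℝ → E}
  {T : Set ℝ}

theorem IsPrimitive.exists_tendsto_leftLimFilter (hu : IsPrimitive μ F u) (hF : Integrable F μ) :
    ∃ w, Tendsto (fun x => u (tsSigma T x)) (leftLimFilter T) (nhds w) := by
  unfold leftLimFilter
  split_ifs with hT
  · have hsub : T ⊆ Ici (sInf T) := fun x hx => csInf_le hT hx
    have hσ : Tendsto (tsSigma T) (nhdsWithin (sInf T) T)
        (nhdsWithin (tsSigma T (sInf T)) (Ici (tsSigma T (sInf T)))) := by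
      refine tendsto_nhdsWithin_iff.2 ⟨(continuousWithinAt_tsSigma_Ici T _).mono hsub, ?_⟩
      filter_upwards [self_mem_nhdsWithin] with x hx using tsSigma_mono T (hsub hx)
    exact ⟨_, (hu.continuousWithinAt_Ici hF.locallyIntegrable _).tendsto.comp hσ⟩
  · obtain ⟨w, hw⟩ := hu.exists_tendsto_atBot hF
    exact ⟨w, (hw.comp (tendsto_tsSigma_atBot hT)).mono_left inf_le_left⟩

theorem IsPrimitive.exists_tendsto_rightLimFilter (hu : IsPrimitive μ F u)
    (hF : Integrable F μ) (hT : BddAbove T → μ {sSup T} = 0) :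
    ∃ w, Tendsto (fun x => u (tsSigma T x)) (rightLimFilter T) (nhds w) := by
  unfold rightLimFilter
  split_ifs with hbdd
  · exact ⟨_, (hu.continuousAt hF.locallyIntegrable (hT hbdd)).tendsto.comp
      (tendsto_tsSigma_nhdsWithin_csSup hbdd)⟩
  · obtain ⟨w, hw⟩ := hu.exists_tendsto_atTop hF
    exact ⟨w, (hw.comp (tendsto_tsSigma_atTop hbdd)).mono_left inf_le_left⟩

end EndpointLimits

section Wronskian

variable {T : Set ℝ} {μ ν : Measure ℝ} {f f1 g g1 φ ψ : ℝ → ℂ}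

section IsPair

variable {p u u1 h : ℝ → ℂ}

theorem IsPair.isPrimitive (hu : IsPair T μ p u u1 h) :
    IsPrimitive volume (fun t => u1 t / extK T p t) u :=
  isPrimitive_of_le fun c x hcx => (hu c x hcx).1

theorem IsPair.isPrimitive_quasiDeriv (hu : IsPair T μ p u u1 h) : IsPrimitive μ h u1 :=
  isPrimitive_of_le fun c x hcx => by
    rw [intervalIntegral.integral_of_le hcx]
    exact (hu c x hcx).2

theorem IsPair.measurable [SFinite μ] (hu : IsPair T μ p u u1 h) (hh : LocallyIntegrable h μ)
    (hp : LocallyIntegrable fun t => 1 / extK T p t) : Measurable u :=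
  hu.isPrimitive.measurable (hu.isPrimitive_quasiDeriv.locallyIntegrable_div hh hp)

end IsPair

theorem locallyIntegrable_ofReal {F : ℝ → ℝ} (hF : LocallyIntegrable F ν) :
    LocallyIntegrable (fun t => (F t : ℂ)) ν := fun x =>
  have ⟨s, hs, hint⟩ := hF x
  ⟨s, hs, hint.integrable.ofReal⟩

theorem locallyIntegrable_one_div_extK {p : ℝ → ℂ} (hT : T.Nonempty)
    (hν : ∀ c d : ℝ, c ≤ d → ν (Ico c d) = ENNReal.ofReal (tsRho T d - tsRho T c))
    (hp : LocallyIntegrable (fun t => 1 / p t) ν) :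
    LocallyIntegrable fun t => 1 / extK T p t := by
  rw [extK_eq_comp_tsCeil]
  exact locallyIntegrable_comp_tsCeil hT hν hp

variable {p r q : ℝ → ℝ}

theorem isPrimitive_wr_of_memD2 [SFinite μ]
    (hp : LocallyIntegrable fun t => 1 / extK T (cR p) t)
    (hf : MemD2 T μ p r q f f1 φ) (hg : MemD2 T μ p r q g g1 ψ) :
    IsPrimitive μ (fun t => f t * ψ t - φ t * g t) (Wr f f1 g g1) :=
  isPrimitive_wr hp hf.2.1.isPrimitive hf.2.1.isPrimitive_quasiDeriv hf.1
    hg.2.1.isPrimitive hg.2.1.isPrimitive_quasiDeriv hg.1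

theorem integrableOn_tsKappa_of_memD2 [SFinite μ]
    (hp : LocallyIntegrable fun t => 1 / extK T (cR p) t)
    (hr : AEStronglyMeasurable r μ) (hrpos : ∀ᵐ t ∂μ, 0 < r t) (hq : AEStronglyMeasurable q μ)
    (hf : MemD2 T μ p r q f f1 φ) (hg : MemD2 T μ p r q g g1 ψ) :
    IntegrableOn (fun t => f t * ψ t - φ t * g t) (tsKappa T) μ := by
  obtain ⟨hφ, hf, hfL2, hℓf⟩ := hf
  obtain ⟨hψ, hg, hgL2, hℓg⟩ := hg
  exact integrableOn_tsKappa_mul_sub_mul hr hrpos hq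
    (hf.measurable hφ hp).aestronglyMeasurable hφ.aestronglyMeasurable
    (hg.measurable hψ hp).aestronglyMeasurable hψ.aestronglyMeasurable hfL2 hℓf hgL2 hℓg

end Wronskian

theorem wronskian_limits_exist_at_endpoints_general
    (T : Set ℝ) (hne : T.Nonempty) (hcl : IsClosed T)
    (μ ν : Measure ℝ)
    (hμ : ∀ c d : ℝ, c ≤ d →
      μ (Set.Ioc c d) = ENNReal.ofReal (tsSigma (tsKappa T) d - tsSigma (tsKappa T) c))
    (hν : ∀ c d : ℝ, c ≤ d → ν (Set.Ico c d) = ENNReal.ofReal (tsRho T d - tsRho T c))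
    (p r q : ℝ → ℝ)
    (hr : AEStronglyMeasurable r μ) (hrpos : ∀ᵐ t ∂μ, 0 < r t)
    (hq : AEStronglyMeasurable q μ)
    (_hpne : ∀ᵐ t ∂ν, p t ≠ 0) (hp : LocallyIntegrable (fun t => 1 / p t) ν)
    (f f1 g g1 : ℝ → ℂ)
    (hf : ∃ h : ℝ → ℂ, MemD2 T μ p r q f f1 h)
    (hg : ∃ h : ℝ → ℂ, MemD2 T μ p r q g g1 h) :
    (∃ wa : ℂ, Filter.Tendsto (fun x => Wr f f1 g g1 (tsSigma T x))
        (leftLimFilter T) (nhds wa)) ∧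
    (∃ wb : ℂ, Filter.Tendsto (fun x => Wr f f1 g g1 (tsSigma T x))
        (rightLimFilter T) (nhds wb)) := by
  obtain rfl := eq_measure_tsSigmaStieltjes hμ
  obtain ⟨φ, hf⟩ := hf
  obtain ⟨ψ, hg⟩ := hg
  have hpC : LocallyIntegrable (fun t => 1 / cR p t) ν := by
    simpa only [cR, Complex.ofReal_div, Complex.ofReal_one] using locallyIntegrable_ofReal hp
  have hpbar := locallyIntegrable_one_div_extK hne hν hpC
  have hW := isPrimitive_wr_of_memD2 hpbar hf hg
  have hint := integrableOn_tsKappa_of_memD2 hpbar hr hrpos hq hf hg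
  rw [IntegrableOn, restrict_measure_tsSigmaStieltjes (isClosed_tsKappa hcl)] at hint
  refine ⟨hW.exists_tendsto_leftLimFilter hint, hW.exists_tendsto_rightLimFilter hint ?_⟩
  exact fun hT => measure_tsSigmaStieltjes_singleton_of_isGreatest
    ⟨csSup_mem_tsKappa hne hcl hT, fun _ hx => le_csSup hT (tsKappa_subset T hx)⟩

/-- For pairs `(f, f^[1])` and `(g, g^[1])` in `D_ℓ²`, the limits of the Wronskian
`W(f,g)(σ(x))` as `x ↓ a` in `𝕋` and as `x ↑ b` in `𝕋` exist and are finite. -/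
theorem wronskian_limits_exist_at_endpoints
    (T : Set ℝ) (hne : T.Nonempty) (hcl : IsClosed T)
    (hfive : ∃ s : Finset ℝ, ↑s ⊆ T ∧ 5 ≤ s.card)
    (μ ν : Measure ℝ)
    (hμ : ∀ c d : ℝ, c ≤ d →
      μ (Set.Ioc c d) = ENNReal.ofReal (tsSigma (tsKappa T) d - tsSigma (tsKappa T) c))
    (hν : ∀ c d : ℝ, c ≤ d → ν (Set.Ico c d) = ENNReal.ofReal (tsRho T d - tsRho T c))
    (p r q : ℝ → ℝ)
    (hr : LocallyIntegrable r μ) (hrpos : ∀ᵐ t ∂μ, 0 < r t)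
    (hq : LocallyIntegrable q μ)
    (hpne : ∀ᵐ t ∂ν, p t ≠ 0) (hp : LocallyIntegrable (fun t => 1 / p t) ν)
    (f f1 g g1 : ℝ → ℂ)
    (hf : ∃ h : ℝ → ℂ, MemD2 T μ p r q f f1 h)
    (hg : ∃ h : ℝ → ℂ, MemD2 T μ p r q g g1 h) :
    (∃ wa : ℂ, Filter.Tendsto (fun x => Wr f f1 g g1 (tsSigma T x))
        (leftLimFilter T) (nhds wa)) ∧
    (∃ wb : ℂ, Filter.Tendsto (fun x => Wr f f1 g g1 (tsSigma T x))
        (rightLimFilter T) (nhds wb)) := by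
  exact wronskian_limits_exist_at_endpoints_general T hne hcl μ ν hμ hν p r q
    hr.aestronglyMeasurable hrpos hq.aestronglyMeasurable hpne hp f f1 g g1 hf hg
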